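/- Let S be an idempotent covered semigroup. Then S is simple (S has exactly one 𝓙-class, i.e., S¹aS¹ = S¹bS¹ for all a, b ∈ S) if and only if T(S) is simple, and S is bisimple (S has exactly one 𝓓-class) if and only if T(S) is bisimple. -/

import Mathlib

namespace SemibandEmbed

/-- The two-element right-zero semigroup `R₂ = {σ, τ}`. -/
inductive R2 : Type where
  | σ : R2
  | τ : R2
  deriving DecidableEq

section GreenDefs

variable {S : Type*} [Semigroup S]

/-- Green's relation 𝓡 : `a 𝓡 b` iff `a S¹ = b S¹` (inside `S¹ = WithOne S`). -/
def greenR (a b : S) : Prop :=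
  {x : WithOne S | ∃ u : WithOne S, x = (a : WithOne S) * u} =
    {x : WithOne S | ∃ u : WithOne S, x = (b : WithOne S) * u}

/-- Green's relation 𝓛 : `a 𝓛 b` iff `S¹ a = S¹ b`. -/
def greenL (a b : S) : Prop :=
  {x : WithOne S | ∃ u : WithOne S, x = u * (a : WithOne S)} =
    {x : WithOne S | ∃ u : WithOne S, x = u * (b : WithOne S)}

/-- Green's relation 𝓗 = 𝓛 ∩ 𝓡. -/
def greenH (a b : S) : Prop := greenL a b ∧ greenR a b

/-- Green's relation 𝓓 : `a 𝓓 b` iff `a 𝓡 c` and `c 𝓛 b` for some `c`. -/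
def greenD (a b : S) : Prop := ∃ c : S, greenR a c ∧ greenL c b

/-- Green's relation 𝓙 : `a 𝓙 b` iff `S¹ a S¹ = S¹ b S¹`. -/
def greenJ (a b : S) : Prop :=
  {x : WithOne S | ∃ u v : WithOne S, x = u * (a : WithOne S) * v} =
    {x : WithOne S | ∃ u v : WithOne S, x = u * (b : WithOne S) * v}

/-- Mitsch's natural partial order on a semigroup. -/
def natLe (a b : S) : Prop := ∃ x y : S, a = x * b ∧ a = b * y ∧ a = a * y

end GreenDefs

/-- A semigroup is idempotent covered if every element `s` satisfies `s e = s = f s`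
for some idempotents `e`, `f`. -/
def IdemCovered (S : Type*) [Semigroup S] : Prop :=
  ∀ s : S, ∃ e f : S, IsIdempotentElem e ∧ IsIdempotentElem f ∧ s * e = s ∧ f * s = s

/-- A semigroup is regular if every `a` satisfies `a x a = a` for some `x`. -/
def IsRegularSemigroup (S : Type*) [Semigroup S] : Prop :=
  ∀ a : S, ∃ x : S, a * x * a = a

/-- A semigroup is periodic if every element generates a finite monogenic subsemigroup,
i.e. `aᵐ = aⁿ` for some `0 < m < n` (powers computed in `S¹ = WithOne S`). -/
def IsPeriodic (S : Type*) [Semigroup S] : Prop :=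
  ∀ a : S, ∃ m n : ℕ, 0 < m ∧ m < n ∧ (a : WithOne S) ^ m = (a : WithOne S) ^ n

/-- `𝓗` is a left congruence. -/
def IsLeftCongH (S : Type*) [Semigroup S] : Prop :=
  ∀ a b c : S, greenH a b → greenH (c * a) (c * b)

/-- `𝓗` is a right congruence. -/
def IsRightCongH (S : Type*) [Semigroup S] : Prop :=
  ∀ a b c : S, greenH a b → greenH (a * c) (b * c)

/-- A semigroup is completely regular if every element is 𝓗-related to an idempotent. -/
def IsCompletelyRegular (S : Type*) [Semigroup S] : Prop :=
  ∀ a : S, ∃ e : S, IsIdempotentElem e ∧ greenH a e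

section SemidirectProduct

variable {S : Type*} [Semigroup S]

/-- The multiplication of the semidirect product `(S × S) * R₂`:
`(t₁,s₁,σ)·(t₂,s₂,α) = (t₁s₂, s₁s₂, α)` and `(t₁,s₁,τ)·(t₂,s₂,α) = (t₁t₂, s₁t₂, α)`. -/
def sdMul (x y : S × S × R2) : S × S × R2 :=
  match x, y with
  | (t₁, s₁, R2.σ), (_, s₂, α) => (t₁ * s₂, s₁ * s₂, α)
  | (t₁, s₁, R2.τ), (t₂, _, α) => (t₁ * t₂, s₁ * t₂, α)

instance : Mul (S × S × R2) := ⟨sdMul⟩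

theorem sdMul_def (x y : S × S × R2) : x * y = sdMul x y := rfl

instance : Semigroup (S × S × R2) where
  mul_assoc x y z := by
    obtain ⟨t₁, s₁, α₁⟩ := x
    obtain ⟨t₂, s₂, α₂⟩ := y
    obtain ⟨t₃, s₃, α₃⟩ := z
    cases α₁ <;> cases α₂ <;> simp [sdMul_def, sdMul, mul_assoc]

/-- The set `E = {(s,t,α) ∈ E(T*R₂) : s ∈ S¹ t}`. -/
def Eset (S : Type*) [Semigroup S] : Set (S × S × R2) :=
  {x | IsIdempotentElem x ∧ ∃ a : WithOne S, (x.1 : WithOne S) = a * (x.2.1 : WithOne S)}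

/-- `T(S)`: the subsemigroup of the semidirect product generated by `E`. -/
def TS (S : Type*) [Semigroup S] : Subsemigroup (S × S × R2) :=
  Subsemigroup.closure (Eset S)

/-- Green's `𝓛` is a right congruence. -/
theorem greenL_mul_right {S : Type*} [Semigroup S] {a b : S} (hab : greenL a b) (c : S) :
    greenL (a * c) (b * c) := by
  have key : ∀ {a b : S}, greenL a b → ∀ x : WithOne S,
      (∃ u : WithOne S, x = u * ((a * c : S) : WithOne S)) →
      (∃ u : WithOne S, x = u * ((b * c : S) : WithOne S)) := by
    intro a b hab x hx
    obtain ⟨u, rfl⟩ := hx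
    have h1 : (u * (a : WithOne S)) ∈
        {x : WithOne S | ∃ u : WithOne S, x = u * (a : WithOne S)} := ⟨u, rfl⟩
    rw [greenL] at hab
    rw [hab] at h1
    obtain ⟨w, hw⟩ := h1
    refine ⟨w, ?_⟩
    rw [WithOne.coe_mul, WithOne.coe_mul, ← mul_assoc, hw, mul_assoc]
  have hab' : greenL b a := hab.symm
  ext x
  exact ⟨key hab x, key hab' x⟩

/-- `R(S) = {(s,t,α) ∈ T(S) : s 𝓛 t}`, a subsemigroup of `T(S)`. -/
def RS (S : Type*) [Semigroup S] : Subsemigroup ↥(TS S) where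
  carrier := {x | greenL (x : S × S × R2).1 (x : S × S × R2).2.1}
  mul_mem' := by
    rintro ⟨⟨s, t, α⟩, hx⟩ ⟨⟨u, v, β⟩, hy⟩ hxs hys
    simp only [Set.mem_setOf_eq] at hxs hys ⊢
    cases α <;> exact greenL_mul_right hxs _

end SemidirectProduct

/-
The projection of `T(S)` onto its middle coordinate `t` is surjective and both preserves and
reflects `𝓙` and `𝓓`, which gives both equivalences. An element of `T(S)` has the form
`(at, t, α)`. Since `(av, v, σ)(s, t, α) = (avt, vt, α)`, left multiples in `T(S)` amount to left
multiples of `t` with `α` fixed; since `(at, t, α)(v, v, β) = (a(tv), tv, β)`, every right multiple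
of `t` lifts, with the same `a`. The projection is not a homomorphism: a left factor with label `τ`
sees the coordinate `s` instead of `t`, which is harmless because `s` is a left multiple of `t`.
-/

section GreenRelations

theorem setOf_rel_eq_iff {α : Type*} {r : α → α → Prop} (refl : ∀ a, r a a)
    (trans : ∀ {a b c}, r a b → r b c → r a c) {a b : α} :
    {x | r a x} = {x | r b x} ↔ r a b ∧ r b a := by
  refine ⟨fun h => ⟨?_, ?_⟩, fun ⟨hab, hba⟩ => Set.ext fun x => ⟨trans hba, trans hab⟩⟩
  · exact h.symm.subset (refl b)
  · exact h.subset (refl a)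

variable {S : Type*} [Semigroup S]

theorem exists_coe_eq_mul_coe (u : WithOne S) (s : S) :
    ∃ w : S, (w : WithOne S) = u * (s : WithOne S) := by
  cases u using WithOne.recOneCoe with
  | one => exact ⟨s, (one_mul _).symm⟩
  | coe u => exact ⟨u * s, WithOne.coe_mul u s⟩

theorem exists_coe_eq_coe_mul (s : S) (u : WithOne S) :
    ∃ w : S, (w : WithOne S) = (s : WithOne S) * u := by
  cases u using WithOne.recOneCoe with
  | one => exact ⟨s, (mul_one _).symm⟩
  | coe u => exact ⟨s * u, WithOne.coe_mul s u⟩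

theorem exists_coe_eq_mul_iff {f a b : S} (hf : f * a = a) :
    (∃ u : WithOne S, (b : WithOne S) = u * a) ↔ ∃ u : S, b = u * a := by
  refine ⟨fun ⟨u, hu⟩ => ?_, fun ⟨u, hu⟩ => ⟨u, by rw [hu, WithOne.coe_mul]⟩⟩
  obtain ⟨w, hw⟩ := exists_coe_eq_mul_coe u f
  exact ⟨w, WithOne.coe_injective <| by
    rw [WithOne.coe_mul, hw, mul_assoc, ← WithOne.coe_mul f, hf, hu]⟩

theorem coe_dvd_coe_iff {e a b : S} (he : a * e = a) : (a : WithOne S) ∣ b ↔ a ∣ b := by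
  refine ⟨fun ⟨u, hu⟩ => ?_, fun ⟨u, hu⟩ => ⟨u, by rw [hu, WithOne.coe_mul]⟩⟩
  obtain ⟨w, hw⟩ := exists_coe_eq_coe_mul e u
  exact ⟨w, WithOne.coe_injective <| by
    rw [WithOne.coe_mul, hw, ← mul_assoc, ← WithOne.coe_mul a, he, hu]⟩

theorem exists_coe_eq_mul_mul_iff {e f a b : S} (he : a * e = a) (hf : f * a = a) :
    (∃ u v : WithOne S, (b : WithOne S) = u * a * v) ↔ ∃ u v : S, b = u * a * v := by
  refine ⟨fun ⟨u, v, h⟩ => ?_,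
    fun ⟨u, v, h⟩ => ⟨u, v, by rw [h, WithOne.coe_mul, WithOne.coe_mul]⟩⟩
  obtain ⟨p, hp⟩ := exists_coe_eq_mul_coe u f
  have hpa : ((p * a : S) : WithOne S) = u * a := by
    rw [WithOne.coe_mul, hp, mul_assoc, ← WithOne.coe_mul f, hf]
  have hdvd : ((p * a : S) : WithOne S) ∣ b := ⟨v, by rw [hpa, h]⟩
  obtain ⟨q, hq⟩ := (coe_dvd_coe_iff (by rw [mul_assoc, he])).1 hdvd
  exact ⟨p, q, hq⟩

theorem IdemCovered.greenL_iff (hS : IdemCovered S) {a b : S} :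
    greenL a b ↔ (∃ u, b = u * a) ∧ ∃ u, a = u * b := by
  obtain ⟨-, _, -, -, -, ha⟩ := hS a
  obtain ⟨-, _, -, -, -, hb⟩ := hS b
  rw [← exists_coe_eq_mul_iff ha, ← exists_coe_eq_mul_iff hb]
  exact setOf_rel_eq_iff (r := fun x y : WithOne S => ∃ u, y = u * x)
    (fun _ => ⟨1, (one_mul _).symm⟩)
    (by rintro _ _ _ ⟨u, rfl⟩ ⟨v, rfl⟩; exact ⟨v * u, (mul_assoc ..).symm⟩)

theorem IdemCovered.greenR_iff (hS : IdemCovered S) {a b : S} :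
    greenR a b ↔ a ∣ b ∧ b ∣ a := by
  obtain ⟨_, -, -, -, ha, -⟩ := hS a
  obtain ⟨_, -, -, -, hb, -⟩ := hS b
  rw [← coe_dvd_coe_iff ha, ← coe_dvd_coe_iff hb]
  exact setOf_rel_eq_iff (r := fun x y : WithOne S => x ∣ y) dvd_refl dvd_trans

theorem IdemCovered.greenJ_iff (hS : IdemCovered S) {a b : S} :
    greenJ a b ↔ (∃ u v, b = u * a * v) ∧ ∃ u v, a = u * b * v := by
  obtain ⟨_, _, -, -, ha, ha'⟩ := hS a
  obtain ⟨_, _, -, -, hb, hb'⟩ := hS b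
  rw [← exists_coe_eq_mul_mul_iff ha ha', ← exists_coe_eq_mul_mul_iff hb hb']
  exact setOf_rel_eq_iff (r := fun x y : WithOne S => ∃ u v, y = u * x * v)
    (fun _ => ⟨1, 1, by rw [one_mul, mul_one]⟩)
    (by rintro _ _ _ ⟨u, v, rfl⟩ ⟨p, q, rfl⟩; exact ⟨p * u, v * q, by simp only [mul_assoc]⟩)

end GreenRelations

section Membership

variable {S : Type*}

/-- The coordinate of `x` that a left factor with label `α` multiplies by: the middle one for `σ`,
the first one for `τ`. It makes the two cases of the multiplication of `T*R₂` a single formula. -/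
def coord (α : R2) (x : S × S × R2) : S :=
  match α with
  | R2.σ => x.2.1
  | R2.τ => x.1

theorem coord_diag (α β : R2) (v : S) : coord α (v, v, β) = v := by
  cases α <;> rfl

variable [Semigroup S]

theorem mul_eq_coord (x y : S × S × R2) :
    x * y = (x.1 * coord x.2.2 y, x.2.1 * coord x.2.2 y, y.2.2) := by
  obtain ⟨s, t, _ | _⟩ := x <;> rfl

theorem sigma_mem_Eset {x e : S} (he : IsIdempotentElem e) (hx : x * e = x) :
    (x, e, R2.σ) ∈ Eset S :=
  ⟨Prod.ext hx (Prod.ext he rfl), x, by rw [← WithOne.coe_mul, hx]⟩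

theorem diag_mem_Eset {e : S} (he : IsIdempotentElem e) (α : R2) : (e, e, α) ∈ Eset S := by
  refine ⟨?_, e, by rw [← WithOne.coe_mul, he.eq]⟩
  rw [IsIdempotentElem, mul_eq_coord, coord_diag, he.eq]

theorem IdemCovered.mem_TS_iff (hS : IdemCovered S) {x : S × S × R2} :
    x ∈ TS S ↔ ∃ a, x.1 = a * x.2.1 := by
  constructor
  · intro hx
    induction hx using Subsemigroup.closure_induction with
    | mem x hx =>
      obtain ⟨-, f, -, -, -, hf⟩ := hS x.2.1
      exact (exists_coe_eq_mul_iff hf).1 hx.2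
    | mul x y _ _ hx _ =>
      obtain ⟨a, ha⟩ := hx
      exact ⟨a, by simp only [mul_eq_coord, ha, mul_assoc]⟩
  · obtain ⟨s, t, α⟩ := x
    rintro ⟨a, rfl : s = a * t⟩
    obtain ⟨e, f, he, hf, hte, hft⟩ := hS t
    have factorization : (a * t, t, α) =
        (a * f, f, R2.σ) * (f, f, R2.τ) * (t, e, R2.σ) * (e, e, α) := by
      simp only [mul_eq_coord, coord, mul_assoc, hf.eq, hft, hte]
    rw [factorization]
    refine mul_mem (mul_mem (mul_mem ?_ ?_) ?_) ?_ <;> refine Subsemigroup.subset_closure ?_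
    · exact sigma_mem_Eset hf (by rw [mul_assoc, hf.eq])
    · exact diag_mem_Eset hf R2.τ
    · exact sigma_mem_Eset he hte
    · exact diag_mem_Eset he α

theorem IdemCovered.mk_mem_TS (hS : IdemCovered S) (a t : S) (α : R2) : (a * t, t, α) ∈ TS S :=
  hS.mem_TS_iff.2 ⟨a, rfl⟩

theorem IdemCovered.diag_mem_TS (hS : IdemCovered S) (t : S) (α : R2) : (t, t, α) ∈ TS S := by
  obtain ⟨-, f, -, -, -, hf⟩ := hS t
  exact hS.mem_TS_iff.2 ⟨f, hf.symm⟩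

theorem IdemCovered.exists_coord_eq_mul (hS : IdemCovered S) (α : R2) {x : S × S × R2}
    (hx : x ∈ TS S) : ∃ u, coord α x = u * x.2.1 := by
  cases α with
  | σ =>
    obtain ⟨-, f, -, -, -, hf⟩ := hS x.2.1
    exact ⟨f, hf.symm⟩
  | τ => exact hS.mem_TS_iff.1 hx

theorem IdemCovered.idemCovered_TS (hS : IdemCovered S) : IdemCovered (TS S) := by
  rintro ⟨⟨s, t, α⟩, hx⟩
  obtain ⟨a, rfl : s = a * t⟩ := hS.mem_TS_iff.1 hx
  obtain ⟨e, f, he, hf, hte, hft⟩ := hS t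
  have he' := diag_mem_Eset he α
  have hf' := sigma_mem_Eset (x := a * f) hf (by rw [mul_assoc, hf.eq])
  refine ⟨⟨_, Subsemigroup.subset_closure he'⟩, ⟨_, Subsemigroup.subset_closure hf'⟩,
    Subtype.ext he'.1, Subtype.ext hf'.1, Subtype.ext ?_, Subtype.ext ?_⟩
  · simp only [MulMemClass.coe_mul, mul_eq_coord, coord_diag, mul_assoc, hte]
  · simp only [MulMemClass.coe_mul, mul_eq_coord, coord, mul_assoc, hft]

end Membership

section Projection

variable {S : Type*} [Semigroup S]

/-- The projection `(s, t, α) ↦ t` of `T(S)` onto `S`, along which Green's relations `𝓙` and `𝓓`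
are transferred. It is not a homomorphism. -/
def proj (x : TS S) : S := x.1.2.1

theorem IdemCovered.proj_surjective (hS : IdemCovered S) :
    Function.Surjective (proj : TS S → S) :=
  fun t => ⟨⟨(t, t, R2.σ), hS.diag_mem_TS t R2.σ⟩, rfl⟩

theorem IdemCovered.exists_eq_mul_iff_proj (hS : IdemCovered S) {x y : TS S} :
    (∃ z, y = z * x) ↔ y.1.2.2 = x.1.2.2 ∧ ∃ u, proj y = u * proj x := by
  constructor
  · rintro ⟨z, rfl⟩
    obtain ⟨u, hu⟩ := hS.exists_coord_eq_mul z.1.2.2 x.2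
    simp only [proj, MulMemClass.coe_mul, mul_eq_coord, hu, true_and]
    exact ⟨z.1.2.1 * u, (mul_assoc ..).symm⟩
  · rintro ⟨hα, u, hu : y.1.2.1 = u * x.1.2.1⟩
    obtain ⟨a, ha⟩ := hS.mem_TS_iff.1 y.2
    refine ⟨⟨(a * u, u, R2.σ), hS.mk_mem_TS a u R2.σ⟩, Subtype.ext ?_⟩
    rw [MulMemClass.coe_mul, mul_eq_coord]
    exact Prod.ext (by rw [ha, hu, ← mul_assoc]; rfl) (Prod.ext hu hα)

theorem proj_dvd_proj {x y : TS S} (h : x ∣ y) : proj x ∣ proj y := by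
  obtain ⟨z, rfl⟩ := h
  exact ⟨coord x.1.2.2 z, by simp only [proj, MulMemClass.coe_mul, mul_eq_coord]⟩

theorem IdemCovered.dvd_of_proj_dvd (hS : IdemCovered S) {x y : TS S} {a : S}
    (hx : x.1.1 = a * proj x) (hy : y.1.1 = a * proj y) (h : proj x ∣ proj y) : x ∣ y := by
  obtain ⟨v, hv⟩ := h
  refine ⟨⟨(v, v, y.1.2.2), hS.diag_mem_TS v _⟩, Subtype.ext ?_⟩
  rw [MulMemClass.coe_mul, mul_eq_coord, coord_diag]
  exact Prod.ext (by rw [hx, hy, hv, mul_assoc]) (Prod.ext hv rfl)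

theorem IdemCovered.exists_eq_mul_mul_iff_proj (hS : IdemCovered S) {x y : TS S} :
    (∃ u v, y = u * x * v) ↔ ∃ p q, proj y = p * proj x * q := by
  constructor
  · rintro ⟨u, v, rfl⟩
    obtain ⟨-, p, hp⟩ := hS.exists_eq_mul_iff_proj.1 ⟨u, rfl⟩
    obtain ⟨q, hq⟩ := proj_dvd_proj (Dvd.intro v rfl : u * x ∣ u * x * v)
    exact ⟨p, q, by rw [hq, hp]⟩
  · rintro ⟨p, q, hpq⟩
    obtain ⟨a, ha⟩ := hS.mem_TS_iff.1 x.2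
    let z : TS S := ⟨_, hS.mk_mem_TS a (proj x * q) y.1.2.2⟩
    obtain ⟨v, hv⟩ : x ∣ z := hS.dvd_of_proj_dvd ha rfl ⟨q, rfl⟩
    obtain ⟨u, hu⟩ : ∃ u, y = u * z :=
      hS.exists_eq_mul_iff_proj.2 ⟨rfl, p, by rw [hpq, mul_assoc]; rfl⟩
    exact ⟨u, v, by rw [hu, hv, mul_assoc]⟩

theorem IdemCovered.greenJ_iff_proj (hS : IdemCovered S) {x y : TS S} :
    greenJ x y ↔ greenJ (proj x) (proj y) := by
  rw [hS.idemCovered_TS.greenJ_iff, hS.greenJ_iff, hS.exists_eq_mul_mul_iff_proj,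
    hS.exists_eq_mul_mul_iff_proj]

theorem IdemCovered.greenL_iff_proj (hS : IdemCovered S) {x y : TS S} :
    greenL x y ↔ x.1.2.2 = y.1.2.2 ∧ greenL (proj x) (proj y) := by
  rw [hS.idemCovered_TS.greenL_iff, hS.greenL_iff, hS.exists_eq_mul_iff_proj,
    hS.exists_eq_mul_iff_proj, eq_comm]
  tauto

theorem IdemCovered.greenR_proj (hS : IdemCovered S) {x y : TS S} (h : greenR x y) :
    greenR (proj x) (proj y) :=
  hS.greenR_iff.2 <| (hS.idemCovered_TS.greenR_iff.1 h).imp proj_dvd_proj proj_dvd_proj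

theorem IdemCovered.greenR_of_proj (hS : IdemCovered S) {x y : TS S} {a : S}
    (hx : x.1.1 = a * proj x) (hy : y.1.1 = a * proj y) (h : greenR (proj x) (proj y)) :
    greenR x y :=
  hS.idemCovered_TS.greenR_iff.2 <|
    (hS.greenR_iff.1 h).imp (hS.dvd_of_proj_dvd hx hy) (hS.dvd_of_proj_dvd hy hx)

theorem IdemCovered.greenD_iff_proj (hS : IdemCovered S) {x y : TS S} :
    greenD x y ↔ greenD (proj x) (proj y) := by
  constructor
  · rintro ⟨z, hxz, hzy⟩
    exact ⟨proj z, hS.greenR_proj hxz, (hS.greenL_iff_proj.1 hzy).2⟩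
  · rintro ⟨c, hxc, hcy⟩
    obtain ⟨a, ha⟩ := hS.mem_TS_iff.1 x.2
    exact ⟨⟨_, hS.mk_mem_TS a c y.1.2.2⟩, hS.greenR_of_proj ha rfl hxc,
      hS.greenL_iff_proj.2 ⟨rfl, hcy⟩⟩

end Projection

/-- `S` is simple iff `T(S)` is simple, and bisimple iff `T(S)` is bisimple. -/
theorem statement_15 {S : Type*} [Semigroup S] (hS : IdemCovered S) :
    ((∀ a b : S, greenJ a b) ↔ ∀ x y : ↥(TS S), greenJ x y) ∧
    ((∀ a b : S, greenD a b) ↔ ∀ x y : ↥(TS S), greenD x y) := by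
  simp only [hS.greenJ_iff_proj, hS.greenD_iff_proj]
  exact ⟨hS.proj_surjective.forall₂, hS.proj_surjective.forall₂⟩

end SemibandEmbed
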